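/- arXiv:1201.2715 — 3 statements merged into one kernel-verified Lean document; each statement's English description precedes it below -/
import Mathlib

section
/- Let G be a graph on n vertices with maximum degree Δ and let γ > 1. For every node w and every round t ≥ 1, Σ_{u∈V} (P^t_{w,u} − 1/n)² ≤ Σ_{u∈V} (P^{t−1}_{w,u} − 1/n)² − ((2 − 2/γ)/(γΔ)) · Σ_{[u:v]∈E} (P^{t−1}_{w,u} − P^{t−1}_{w,v})². -/
/-!
Write the diffusion matrix as `P = 1 - c L` with `L` the graph Laplacian and `c = 1 / (γΔ)`. Since
`L` is symmetric and annihilates constants, `⟨x - a, L x⟩ = ⟨x, L x⟩` for every constant `a`, so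
`‖P x - a‖² = ‖x - a‖² - 2c ⟨x, L x⟩ + c² ‖L x‖²`. By Cauchy-Schwarz over the at most `Δ` neighbours
of each vertex, `‖L x‖² ≤ 2Δ ⟨x, L x⟩`; hence the potential drops by at least
`2c (1 - cΔ) ⟨x, L x⟩`, where `⟨x, L x⟩` is the sum of `(x u - x v)²` over the edges.
-/

namespace LB


/-- The diffusion matrix `P = P(γ)` of a graph `G` with maximum degree `Δ`:
`P_{u,v} = 1/(γΔ)` if `{u,v} ∈ E`, `P_{u,u} = 1 - deg(u)/(γΔ)`, and `0` otherwise. -/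
noncomputable def diffMatrix {n : ℕ} (G : SimpleGraph (Fin n)) [DecidableRel G.Adj]
    (γ : ℝ) : Matrix (Fin n) (Fin n) ℝ :=
  Matrix.of fun u v =>
    if G.Adj u v then 1 / (γ * G.maxDegree)
    else if u = v then 1 - (G.degree u : ℝ) / (γ * G.maxDegree)
    else 0

/-- Sum of `g u v` over the edges `[u:v] ∈ E` (i.e. `{u,v} ∈ E` with `u < v`). -/
noncomputable def edgeSum {n : ℕ} (G : SimpleGraph (Fin n)) [DecidableRel G.Adj]
    (g : Fin n → Fin n → ℝ) : ℝ :=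
  ∑ u : Fin n, ∑ v : Fin n, if u < v ∧ G.Adj u v then g u v else 0

/-- The local 2-divergence `Ψ₂(P)` of the diffusion matrix. -/
noncomputable def psi2Diff {n : ℕ} (G : SimpleGraph (Fin n)) [DecidableRel G.Adj]
    (γ : ℝ) : ℝ :=
  ⨆ w : Fin n, Real.sqrt (⨆ T : ℕ, ∑ t ∈ Finset.range (T + 1),
    edgeSum G fun u v => ((diffMatrix G γ ^ t) w u - (diffMatrix G γ ^ t) w v) ^ 2)

/-- Supremum of `g v` over the neighbors `v` of `u` (zero if `u` is isolated). -/
noncomputable def nbrSup {n : ℕ} (G : SimpleGraph (Fin n)) (u : Fin n)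
    (g : Fin n → ℝ) : ℝ :=
  ⨆ v : G.neighborSet u, g v

/-- The refined local 2-divergence `Υ₂(P)` of the diffusion matrix. -/
noncomputable def ups2Diff {n : ℕ} (G : SimpleGraph (Fin n)) [DecidableRel G.Adj]
    (γ : ℝ) : ℝ :=
  ⨆ w : Fin n, Real.sqrt (⨆ T : ℕ, ∑ t ∈ Finset.range (T + 1),
    (1 / 2) * ∑ u : Fin n,
      nbrSup G u fun v => ((diffMatrix G γ ^ t) w u - (diffMatrix G γ ^ t) w v) ^ 2)

open Classical in
/-- Randomly rounded flow along the edge `[u:v]` (`u < v`): the continuous flow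
`f = (x_v - x_u)/(γΔ)` from `v` to `u` is rounded up iff the uniform sample
`r u v ∈ [0,1]` is below the fractional part of `f` (so `⌈f⌉` has probability
`f - ⌊f⌋`, and an integral flow is never altered). -/
noncomputable def diffFlow {n : ℕ} (G : SimpleGraph (Fin n)) [DecidableRel G.Adj]
    (γ : ℝ) (r : Fin n → Fin n → ℝ) (x : Fin n → ℤ) (u v : Fin n) : ℤ :=
  if r u v < Int.fract (((x v : ℝ) - (x u : ℝ)) / (γ * G.maxDegree))
  then ⌈((x v : ℝ) - (x u : ℝ)) / (γ * G.maxDegree)⌉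
  else ⌊((x v : ℝ) - (x u : ℝ)) / (γ * G.maxDegree)⌋

/-- One round of the edge-based discrete diffusion protocol. -/
noncomputable def diffStep {n : ℕ} (G : SimpleGraph (Fin n)) [DecidableRel G.Adj]
    (γ : ℝ) (r : Fin n → Fin n → ℝ) (x : Fin n → ℤ) : Fin n → ℤ := fun u =>
  x u + ∑ v : Fin n,
    if G.Adj u v then (if u < v then diffFlow G γ r x u v else -diffFlow G γ r x v u)
    else 0

/-- The edge-based discrete diffusion process: round `t ≥ 1` uses the uniform
samples `R t : Fin n → Fin n → ℝ` (read at pairs `(u,v)` with `u < v`). -/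
noncomputable def diffLoads {n : ℕ} (G : SimpleGraph (Fin n)) [DecidableRel G.Adj]
    (γ : ℝ) (R : ℕ → Fin n → Fin n → ℝ) (x : Fin n → ℤ) : ℕ → Fin n → ℤ
  | 0 => x
  | t + 1 => diffStep G γ (R (t + 1)) (diffLoads G γ R x t)

section Laplacian

open Matrix

variable {V : Type*} [Fintype V] [DecidableEq V] (G : SimpleGraph V) [DecidableRel G.Adj]

theorem lapMatrix_mulVec_apply_eq_sum_sub {R : Type*} [NonAssocRing R] (x : V → R) (u : V) :
    (G.lapMatrix R *ᵥ x) u = ∑ v ∈ G.neighborFinset u, (x u - x v) := by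
  rw [G.lapMatrix_mulVec_apply, Finset.sum_sub_distrib, Finset.sum_const,
    G.card_neighborFinset_eq_degree, nsmul_eq_mul]

theorem const_dotProduct_lapMatrix_mulVec {R : Type*} [CommRing R] (a : R) (x : V → R) :
    (fun _ ↦ a) ⬝ᵥ (G.lapMatrix R *ᵥ x) = 0 := by
  have hL : G.lapMatrix R *ᵥ (fun _ ↦ a) = 0 := by
    ext u
    simp [lapMatrix_mulVec_apply_eq_sum_sub]
  rw [dotProduct_mulVec, ← mulVec_transpose, G.isSymm_lapMatrix R, hL, zero_dotProduct]

section Field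

variable {R : Type*} [Field R]

theorem two_mul_dotProduct_lapMatrix_mulVec [CharZero R] (x : V → R) :
    2 * (x ⬝ᵥ (G.lapMatrix R *ᵥ x)) = ∑ u, ∑ v ∈ G.neighborFinset u, (x u - x v) ^ 2 := by
  rw [← toLinearMap₂'_apply', G.lapMatrix_toLinearMap₂' R, mul_div_cancel₀ _ two_ne_zero]
  simp only [G.neighborFinset_eq_filter, Finset.sum_filter]

variable [LinearOrder R] [IsStrictOrderedRing R]

theorem sum_sq_lapMatrix_mulVec_le (x : V → R) :
    ∑ u, (G.lapMatrix R *ᵥ x) u ^ 2 ≤ 2 * G.maxDegree * (x ⬝ᵥ (G.lapMatrix R *ᵥ x)) := by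
  calc ∑ u, (G.lapMatrix R *ᵥ x) u ^ 2
      = ∑ u, (∑ v ∈ G.neighborFinset u, (x u - x v)) ^ 2 := by
        simp only [lapMatrix_mulVec_apply_eq_sum_sub]
    _ ≤ ∑ u, G.degree u * ∑ v ∈ G.neighborFinset u, (x u - x v) ^ 2 := by
        gcongr with u
        exact sq_sum_le_card_mul_sum_sq
    _ ≤ ∑ u, G.maxDegree * ∑ v ∈ G.neighborFinset u, (x u - x v) ^ 2 := by
        gcongr with u
        exact G.degree_le_maxDegree u
    _ = 2 * G.maxDegree * (x ⬝ᵥ (G.lapMatrix R *ᵥ x)) := by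
        rw [← Finset.mul_sum, ← two_mul_dotProduct_lapMatrix_mulVec]
        ring

theorem stmt3_general (c a : R) (x : V → R) :
    ∑ u, (((1 - c • G.lapMatrix R) *ᵥ x) u - a) ^ 2
      ≤ ∑ u, (x u - a) ^ 2
        - 2 * c * (1 - c * G.maxDegree) * (x ⬝ᵥ (G.lapMatrix R *ᵥ x)) := by
  have cross : ∑ u, (x u - a) * (G.lapMatrix R *ᵥ x) u = x ⬝ᵥ (G.lapMatrix R *ᵥ x) := by
    change (x - fun _ ↦ a) ⬝ᵥ (G.lapMatrix R *ᵥ x) = _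
    rw [sub_dotProduct, const_dotProduct_lapMatrix_mulVec, sub_zero]
  calc ∑ u, (((1 - c • G.lapMatrix R) *ᵥ x) u - a) ^ 2
      = ∑ u, ((x u - a) ^ 2 - 2 * c * ((x u - a) * (G.lapMatrix R *ᵥ x) u)
          + c ^ 2 * (G.lapMatrix R *ᵥ x) u ^ 2) := by
        refine Finset.sum_congr rfl fun u _ ↦ ?_
        rw [sub_mulVec, one_mulVec, smul_mulVec, Pi.sub_apply, Pi.smul_apply, smul_eq_mul]
        ring
    _ = ∑ u, (x u - a) ^ 2 - 2 * c * (x ⬝ᵥ (G.lapMatrix R *ᵥ x))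
          + c ^ 2 * ∑ u, (G.lapMatrix R *ᵥ x) u ^ 2 := by
        rw [Finset.sum_add_distrib, Finset.sum_sub_distrib, ← Finset.mul_sum, ← Finset.mul_sum,
          cross]
    _ ≤ ∑ u, (x u - a) ^ 2 - 2 * c * (x ⬝ᵥ (G.lapMatrix R *ᵥ x))
          + c ^ 2 * (2 * G.maxDegree * (x ⬝ᵥ (G.lapMatrix R *ᵥ x))) := by
        gcongr
        exact sum_sq_lapMatrix_mulVec_le G x
    _ = _ := by ring

end Field

end Laplacian

theorem two_sub_two_div_div_mul {K : Type*} [Field K] (γ d : K) :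
    (2 - 2 / γ) / (γ * d) = 2 * (1 / (γ * d)) * (1 - 1 / (γ * d) * d) := by
  rcases eq_or_ne d 0 with rfl | hd
  · simp
  · field_simp

section Diffusion

open Matrix

variable {n : ℕ} (G : SimpleGraph (Fin n)) [DecidableRel G.Adj]

theorem two_mul_edgeSum {g : Fin n → Fin n → ℝ} (hg : ∀ u v, g u v = g v u) :
    2 * edgeSum G g = ∑ u, ∑ v ∈ G.neighborFinset u, g u v := by
  have reversed : edgeSum G g = ∑ u, ∑ v, if v < u ∧ G.Adj u v then g u v else 0 := by
    rw [edgeSum, Finset.sum_comm]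
    simp only [G.adj_comm, hg]
  rw [two_mul]
  nth_rewrite 2 [reversed]
  simp only [edgeSum, G.neighborFinset_eq_filter, Finset.sum_filter, ← Finset.sum_add_distrib]
  refine Finset.sum_congr rfl fun u _ ↦ Finset.sum_congr rfl fun v _ ↦ ?_
  by_cases h : G.Adj u v
  · rcases lt_or_gt_of_ne h.ne with huv | huv <;> simp [h, huv, huv.not_gt]
  · simp [h]

theorem edgeSum_sq_sub (x : Fin n → ℝ) :
    edgeSum G (fun u v ↦ (x u - x v) ^ 2) = x ⬝ᵥ (G.lapMatrix ℝ *ᵥ x) := by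
  have h := two_mul_edgeSum G fun u v ↦ sub_sq_comm (x u) (x v)
  rw [← two_mul_dotProduct_lapMatrix_mulVec] at h
  exact mul_left_cancel₀ two_ne_zero h

theorem diffMatrix_eq_one_sub_smul_lapMatrix (γ : ℝ) :
    diffMatrix G γ = 1 - (1 / (γ * G.maxDegree)) • G.lapMatrix ℝ := by
  ext u v
  by_cases huv : u = v
  · subst huv
    simp [diffMatrix, SimpleGraph.lapMatrix, SimpleGraph.degMatrix, div_eq_inv_mul]
  · by_cases h : G.Adj u v <;>
      simp [diffMatrix, SimpleGraph.lapMatrix, SimpleGraph.degMatrix, huv, h]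

theorem diffMatrix_pow_succ_apply (γ : ℝ) (t : ℕ) (w : Fin n) :
    (diffMatrix G γ ^ (t + 1)) w
      = (1 - (1 / (γ * G.maxDegree)) • G.lapMatrix ℝ) *ᵥ (diffMatrix G γ ^ t) w := by
  have hsymm : (diffMatrix G γ).IsSymm := by
    rw [diffMatrix_eq_one_sub_smul_lapMatrix]
    exact isSymm_one.sub ((G.isSymm_lapMatrix ℝ).smul _)
  rw [pow_succ, mul_apply_eq_vecMul, ← mulVec_transpose, hsymm,
    ← diffMatrix_eq_one_sub_smul_lapMatrix]

end Diffusion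

/-- One-round drop of the quadratic potential for diffusion:
for γ > 1 and every node `w` and round `t ≥ 1`,
`∑_u (P^t_{w,u} - 1/n)² ≤ ∑_u (P^{t-1}_{w,u} - 1/n)²
  - ((2-2/γ)/(γΔ)) ∑_{[u:v]∈E} (P^{t-1}_{w,u} - P^{t-1}_{w,v})²`. -/
theorem stmt3 {n : ℕ} (hn : 0 < n) (G : SimpleGraph (Fin n)) [DecidableRel G.Adj]
    (hΔ : 0 < G.maxDegree) (γ : ℝ) (hγ : 1 < γ) (w : Fin n) (t : ℕ) (ht : 1 ≤ t) :
    (∑ u : Fin n, ((diffMatrix G γ ^ t) w u - 1 / n) ^ 2)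
      ≤ (∑ u : Fin n, ((diffMatrix G γ ^ (t - 1)) w u - 1 / n) ^ 2)
        - (2 - 2 / γ) / (γ * G.maxDegree) *
            edgeSum G (fun u v =>
              ((diffMatrix G γ ^ (t - 1)) w u - (diffMatrix G γ ^ (t - 1)) w v) ^ 2) := by
  obtain ⟨t, rfl⟩ := Nat.exists_eq_add_of_le' ht
  simpa only [Nat.add_sub_cancel, diffMatrix_pow_succ_apply, edgeSum_sq_sub,
    two_sub_two_div_div_mul] using stmt3_general G (1 / (γ * G.maxDegree)) (1 / n) _

end LB
end

section
/- Fix a sequence of matchings 𝓜 = ⟨M^{(1)}, M^{(2)}, …⟩ on a graph with n vertices and run the discrete process with independent uniformly random orientations. For any non-negative integers K, α, t with 1 ≤ α ≤ K: max over y ∈ ℤ^n with disc(y) ≤ K of P( max_u x_u^{(t)} ≥ ⌊ȳ⌋ + α | x^{(0)} = y ) ≤ max over y ∈ ℤ^n with disc(y) ≤ K of P( min_u x_u^{(t)} ≤ ⌊ȳ⌋ − α + 3 | x^{(0)} = y ), where ȳ = Σ_u y_u/n is the average of the starting vector; and symmetrically, max over such y of P( min_u x_u^{(t)} ≤ ⌊ȳ⌋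 − α | x^{(0)} = y ) ≤ max over such y of P( max_u x_u^{(t)} ≥ ⌊ȳ⌋ + α − 3 | x^{(0)} = y ). -/
namespace LB


/-- A matching on the vertex set `Fin n`, encoded as an involution;
`f u = u` means that `u` is unmatched, and `f u = v ≠ u` means `{u,v}`
is an edge of the matching. -/
structure Matching (n : ℕ) where
  f : Fin n → Fin n
  invol : ∀ u, f (f u) = u

/-- The matching matrix of a matching: entries `1/2` at `(u,u)`, `(u,v)`, `(v,u)`, `(v,v)`
for matched pairs `{u,v}`, entry `1` at `(w,w)` for unmatched `w`, and `0` otherwise. -/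
noncomputable def Matching.matrix {n : ℕ} (m : Matching n) : Matrix (Fin n) (Fin n) ℝ :=
  Matrix.of fun u v =>
    if m.f u = u then (if v = u then 1 else 0)
    else if v = u ∨ v = m.f u then (1 : ℝ) / 2 else 0

/-- `M^{[t₁,t₂]} = M^{(t₁)} * ⋯ * M^{(t₂)}` (the identity matrix if `t₁ > t₂`). -/
noncomputable def prodMatrix {n : ℕ} (M : ℕ → Matching n) (t₁ t₂ : ℕ) : Matrix (Fin n) (Fin n) ℝ :=
  ((List.range' t₁ (t₂ + 1 - t₁)).map fun s => (M s).matrix).prod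

/-- Sum of `g u v` over the matched pairs `[u:v]` (i.e. `{u,v}` in the matching with `u < v`). -/
noncomputable def pairSum {n : ℕ} (m : Matching n) (g : Fin n → Fin n → ℝ) : ℝ :=
  ∑ u : Fin n, if u < m.f u then g u (m.f u) else 0

/-- The discrepancy `max_{u,v} |x_u - x_v|` of a load vector. -/
noncomputable def disc {n : ℕ} (x : Fin n → ℝ) : ℝ :=
  ⨆ u : Fin n, ⨆ v : Fin n, |x u - x v|

/-- Discrepancy of an integer load vector. -/
noncomputable def discZ {n : ℕ} (x : Fin n → ℤ) : ℝ := disc fun u => (x u : ℝ)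

/-- The time interval `[t₁,t₂]` (with its matchings) is `(K,ε)`-smoothing. -/
def IsSmoothing {n : ℕ} (M : ℕ → Matching n) (t₁ t₂ : ℕ) (K ε : ℝ) : Prop :=
  ∀ ξ : Fin n → ℝ, disc ξ ≤ K → disc (Matrix.vecMul ξ (prodMatrix M (t₁ + 1) t₂)) ≤ ε

/-- `τ_cont(K,ε)`: the minimum `t` such that `[0,t]` is `(K,ε)`-smoothing. -/
noncomputable def tauCont {n : ℕ} (M : ℕ → Matching n) (K ε : ℝ) : ℕ :=
  sInf {t : ℕ | IsSmoothing M 0 t K ε}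

/-- One round of the discrete process: two matched nodes split their total load,
the node indicated by the orientation bit (stored at the pair `(min,max)`) receiving
the excess token; `φ u v = true` for `u < v` means the excess token goes to `u`. -/
def step {n : ℕ} (m : Matching n) (φ : Fin n → Fin n → Bool) (x : Fin n → ℤ) :
    Fin n → ℤ := fun u =>
  if m.f u = u then x u
  else if u < m.f u then
    (if φ u (m.f u) then Int.ediv (x u + x (m.f u) + 1) 2
     else Int.ediv (x u + x (m.f u)) 2)
  else
    (if φ (m.f u) u then Int.ediv (x u + x (m.f u)) 2
     else Int.ediv (x u + x (m.f u) + 1) 2)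

/-- The discrete process started at round `t₁` from load vector `x`:
`loadsFrom M t₁ Φ x r` is the load vector `r` rounds later; the `(r+1)`-st
step uses the matching `M (t₁+r+1)` and the orientations `Φ (r+1)`. -/
def loadsFrom {n : ℕ} (M : ℕ → Matching n) (t₁ : ℕ) (Φ : ℕ → Fin n → Fin n → Bool)
    (x : Fin n → ℤ) : ℕ → Fin n → ℤ
  | 0 => x
  | r + 1 => step (M (t₁ + r + 1)) (Φ (r + 1)) (loadsFrom M t₁ Φ x r)

/-- The discrete process started at round `0`; round `t ≥ 1` uses matching `M t`. -/
def loads {n : ℕ} (M : ℕ → Matching n) (Φ : ℕ → Fin n → Fin n → Bool)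
    (x : Fin n → ℤ) : ℕ → Fin n → ℤ := loadsFrom M 0 Φ x

/-- Extend a finite family of random choices (one for each of the rounds `1,…,T`)
to all rounds: round `s` reads index `s-1`. -/
def lift {A : Type*} (a₀ : A) {T : ℕ} (ω : Fin T → A) : ℕ → A := fun s =>
  if h : s - 1 < T then ω ⟨s - 1, h⟩ else a₀

/-- Default (irrelevant) orientation. -/
def orientDefault (n : ℕ) : Fin n → Fin n → Bool := fun _ _ => true

/-- Probability of an event under the uniform distribution on a finite sample space;
this makes all the per-round random choices independent and uniform. -/
noncomputable def pr {Ω : Type*} [Fintype Ω] (A : Ω → Prop) : ℝ :=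
  haveI := Classical.decPred A
  ((Finset.univ.filter A).card : ℝ) / (Fintype.card Ω : ℝ)

/-- Expectation under the uniform distribution on a finite sample space. -/
noncomputable def ex {Ω : Type*} [Fintype Ω] (Z : Ω → ℝ) : ℝ :=
  (∑ ω : Ω, Z ω) / (Fintype.card Ω : ℝ)

/-- `λ(M) = max{|λ₂(M)|, |λ_n(M)|}` for a symmetric doubly stochastic matrix `M`,
characterized as the operator norm of `M` on the subspace orthogonal to `𝟙`. -/
noncomputable def lamMax {n : ℕ} (M : Matrix (Fin n) (Fin n) ℝ) : ℝ :=
  ⨆ x : {x : Fin n → ℝ // (∑ u, x u) = 0 ∧ (∑ u, (x u) ^ 2) = 1},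
    Real.sqrt (∑ u, (M.mulVec x.1 u) ^ 2)

/-- The round matrix `M = M^{(1)} ⋯ M^{(d)}` of the balancing circuit. -/
noncomputable def roundMatrix {n d : ℕ} (Ms : Fin d → Matching n) : Matrix (Fin n) (Fin n) ℝ :=
  (List.ofFn fun i => (Ms i).matrix).prod

/-- The periodic sequence of matchings of the balancing circuit:
round `t` uses `M^{(((t-1) mod d)+1)}`. -/
def circuit {n d : ℕ} (hd : 0 < d) (Ms : Fin d → Matching n) : ℕ → Matching n :=
  fun t => Ms ⟨(t - 1) % d, Nat.mod_lt _ hd⟩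

/-!
Negating every load and reversing every orientation turns a run of the process into another run:
since `⌊-s/2⌋ = -⌈s/2⌉`, the node that received the larger half of `s` receives the smaller half
of `-s`. Reversal preserves the uniform distribution of the orientations and negation preserves
the discrepancy, so the maximum load started from `y` is distributed as minus the minimum load
started from `-y`. The only asymmetry is in the floor of the average: `⌊-ȳ⌋ = -⌈ȳ⌉` is `-⌊ȳ⌋` or
`-⌊ȳ⌋ - 1`.
-/

section UniformProbability

variable {Ω : Type*} [Fintype Ω]

theorem pr_mono {A B : Ω → Prop} (h : ∀ ω, A ω → B ω) : pr A ≤ pr B := by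
  classical
  unfold pr
  gcongr with ω
  exact h ω

theorem pr_le_one (A : Ω → Prop) : pr A ≤ 1 := by
  classical
  exact div_le_one_of_le₀ (mod_cast Finset.card_le_univ _) (Nat.cast_nonneg _)

theorem pr_comp_equiv {Ω' : Type*} [Fintype Ω'] (e : Ω ≃ Ω') (A : Ω' → Prop) :
    pr (fun ω => A (e ω)) = pr A := by
  classical
  unfold pr
  congr 2
  · exact Finset.card_equiv e (by simp)
  · exact Fintype.card_congr e

theorem bddAbove_range_pr {ι : Sort*} (A : ι → Ω → Prop) :
    BddAbove (Set.range fun i => pr (A i)) :=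
  ⟨1, Set.forall_mem_range.2 fun i => pr_le_one (A i)⟩

end UniformProbability

section Negation

variable {n : ℕ}

theorem discZ_neg (y : Fin n → ℤ) : discZ (-y) = discZ y := by
  simp only [discZ, disc, Pi.neg_apply, Int.cast_neg, neg_sub_neg, abs_sub_comm]

theorem step_compl_neg (m : Matching n) (φ : Fin n → Fin n → Bool) (x : Fin n → ℤ) :
    step m φᶜ (-x) = -step m φ x := by
  have floor_neg_half (a b : ℤ) : (-a + -b) / 2 = -((a + b + 1) / 2) := by omega
  have ceil_neg_half (a b : ℤ) : (-a + -b + 1) / 2 = -((a + b) / 2) := by omega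
  funext u
  simp only [step, ← Int.div_def, Pi.neg_apply, Pi.compl_apply, Bool.compl_eq_bnot,
    Bool.not_eq_true', floor_neg_half, ceil_neg_half]
  split_ifs <;> simp_all

theorem loadsFrom_neg (M : ℕ → Matching n) (t₁ : ℕ) {Φ Ψ : ℕ → Fin n → Fin n → Bool} {r : ℕ}
    (h : ∀ s < r, Ψ (s + 1) = (Φ (s + 1))ᶜ) (x : Fin n → ℤ) :
    loadsFrom M t₁ Ψ (-x) r = -loadsFrom M t₁ Φ x r := by
  induction r with
  | zero => rfl
  | succ r ih =>
    rw [loadsFrom, ih fun s hs => h s (by omega), h r (by omega), step_compl_neg, loadsFrom]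

theorem lift_succ {A : Type*} (a₀ : A) {T : ℕ} (ω : Fin T → A) {s : ℕ} (hs : s < T) :
    lift a₀ ω (s + 1) = ω ⟨s, hs⟩ :=
  dif_pos hs

theorem loads_lift_compl_neg (M : ℕ → Matching n) {t : ℕ} (φ₀ : Fin n → Fin n → Bool)
    (ω : Fin t → Fin n → Fin n → Bool) (x : Fin n → ℤ) :
    loads M (lift φ₀ ωᶜ) (-x) t = -loads M (lift φ₀ ω) x t :=
  loadsFrom_neg M 0 (fun s hs => by rw [lift_succ φ₀ _ hs, lift_succ φ₀ _ hs, Pi.compl_apply]) x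

end Negation

section Tails

variable {n : ℕ} (M : ℕ → Matching n) (t : ℕ) (y : Fin n → ℤ)

/-- The upper tail `P(max_u x_u^{(t)} ≥ a | x^{(0)} = y)` of the maximum load. -/
noncomputable def probMaxGe (a : ℤ) : ℝ :=
  pr fun ω : Fin t → Fin n → Fin n → Bool => ∃ u, a ≤ loads M (lift (orientDefault n) ω) y t u

/-- The lower tail `P(min_u x_u^{(t)} ≤ a | x^{(0)} = y)` of the minimum load. -/
noncomputable def probMinLe (a : ℤ) : ℝ :=
  pr fun ω : Fin t → Fin n → Fin n → Bool => ∃ u, loads M (lift (orientDefault n) ω) y t u ≤ a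

theorem antitone_probMaxGe : Antitone (probMaxGe M t y) :=
  fun _ _ hab => pr_mono fun _ => Exists.imp fun _ => hab.trans

theorem monotone_probMinLe : Monotone (probMinLe M t y) :=
  fun _ _ hab => pr_mono fun _ => Exists.imp fun _ h => h.trans hab

theorem probMinLe_neg (a : ℤ) : probMinLe M t (-y) (-a) = probMaxGe M t y a := by
  rw [probMinLe, ← pr_comp_equiv compl_involutive.toPerm]
  simp only [Function.Involutive.coe_toPerm, loads_lift_compl_neg, Pi.neg_apply, neg_le_neg_iff,
    probMaxGe]

theorem probMaxGe_neg (a : ℤ) : probMaxGe M t (-y) (-a) = probMinLe M t y a := by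
  rw [← probMinLe_neg, neg_neg, neg_neg]

end Tails

section Average

variable {n : ℕ}

/-- The rounded-down average load `⌊ȳ⌋`, where `ȳ = (∑ v, y v) / n`. -/
def floorAvg (y : Fin n → ℤ) : ℤ := (∑ v, y v) / (n : ℤ)

theorem floorAvg_neg_le (hn : 0 < n) (y : Fin n → ℤ) : floorAvg (-y) ≤ -floorAvg y := by
  simp only [floorAvg, Pi.neg_apply, Finset.sum_neg_distrib, Int.neg_ediv,
    Int.sign_natCast_of_ne_zero hn.ne']
  split_ifs <;> omega

theorem neg_floorAvg_le (hn : 0 < n) (y : Fin n → ℤ) : -floorAvg y ≤ floorAvg (-y) + 1 := by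
  simp only [floorAvg, Pi.neg_apply, Finset.sum_neg_distrib, Int.neg_ediv,
    Int.sign_natCast_of_ne_zero hn.ne']
  split_ifs <;> omega

theorem probMaxGe_le_probMinLe_neg (hn : 0 < n) (M : ℕ → Matching n) (t : ℕ) (y : Fin n → ℤ)
    (α : ℤ) :
    probMaxGe M t y (floorAvg y + α) ≤ probMinLe M t (-y) (floorAvg (-y) - α + 1) := by
  rw [← probMinLe_neg]
  exact monotone_probMinLe M t (-y) (by linarith [neg_floorAvg_le hn y])

theorem probMinLe_le_probMaxGe_neg (hn : 0 < n) (M : ℕ → Matching n) (t : ℕ) (y : Fin n → ℤ)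
    (α : ℤ) :
    probMinLe M t y (floorAvg y - α) ≤ probMaxGe M t (-y) (floorAvg (-y) + α) := by
  rw [← probMaxGe_neg]
  exact antitone_probMaxGe M t (-y) (by linarith [floorAvg_neg_le hn y])

end Average

theorem stmt7_general {n : ℕ} (hn : 0 < n) (M : ℕ → Matching n) {S : Set (Fin n → ℤ)}
    (hS : S.Nonempty) (hneg : ∀ y ∈ S, -y ∈ S) (α : ℤ) (t : ℕ) :
    (⨆ y : S, probMaxGe M t y (floorAvg y.1 + α))
      ≤ (⨆ y : S, probMinLe M t y (floorAvg y.1 - α + 1)) ∧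
    (⨆ y : S, probMinLe M t y (floorAvg y.1 - α))
      ≤ ⨆ y : S, probMaxGe M t y (floorAvg y.1 + α) := by
  have : Nonempty S := hS.to_subtype
  exact ⟨ciSup_le fun y => le_ciSup_of_le (bddAbove_range_pr _) ⟨-y, hneg y y.2⟩
      (probMaxGe_le_probMinLe_neg hn M t y α),
    ciSup_le fun y => le_ciSup_of_le (bddAbove_range_pr _) ⟨-y, hneg y y.2⟩
      (probMinLe_le_probMaxGe_neg hn M t y α)⟩

/-- Symmetry between upper-bounding the maximum load and
lower-bounding the minimum load for the discrete process with independent uniformly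
random orientations.  Here `⌊ȳ⌋ = (∑_u y_u) ediv n`. -/
theorem stmt7 {n : ℕ} (hn : 0 < n) (M : ℕ → Matching n) (K α t : ℕ)
    (hα : 1 ≤ α) (hK : α ≤ K) :
    ((⨆ y : {y : Fin n → ℤ // discZ y ≤ K},
        pr fun ω : Fin t → Fin n → Fin n → Bool =>
          ∃ u : Fin n, Int.ediv (∑ v, y.1 v) n + (α : ℤ) ≤
            loads M (lift (orientDefault n) ω) y.1 t u)
      ≤ ⨆ y : {y : Fin n → ℤ // discZ y ≤ K},
        pr fun ω : Fin t → Fin n → Fin n → Bool =>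
          ∃ u : Fin n, loads M (lift (orientDefault n) ω) y.1 t u ≤
            Int.ediv (∑ v, y.1 v) n - (α : ℤ) + 3) ∧
    ((⨆ y : {y : Fin n → ℤ // discZ y ≤ K},
        pr fun ω : Fin t → Fin n → Fin n → Bool =>
          ∃ u : Fin n, loads M (lift (orientDefault n) ω) y.1 t u ≤
            Int.ediv (∑ v, y.1 v) n - (α : ℤ))
      ≤ ⨆ y : {y : Fin n → ℤ // discZ y ≤ K},
        pr fun ω : Fin t → Fin n → Fin n → Bool =>
          ∃ u : Fin n, Int.ediv (∑ v, y.1 v) n + (α : ℤ) - 3 ≤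
            loads M (lift (orientDefault n) ω) y.1 t u) := by
  obtain ⟨hmax, hmin⟩ := stmt7_general hn M (S := {y | discZ y ≤ K}) ⟨0, by simp [discZ, disc]⟩
    (fun y hy => (discZ_neg y).trans_le hy) α t
  exact ⟨hmax.trans (ciSup_mono (bddAbove_range_pr _) fun y =>
      monotone_probMinLe M t y (add_le_add le_rfl (by norm_num))),
    hmin.trans (ciSup_mono (bddAbove_range_pr _) fun y =>
      antitone_probMaxGe M t y (sub_le_self _ (by norm_num)))⟩

end LB
end

section
/- Let G be any graph on n ≥ 2 vertices and 𝓜 = ⟨M^{(1)}, M^{(2)}, …⟩ any sequence of matchings. Run the discrete process with independent uniformly random orientations from x^{(0)} ∈ ℤ^n and the continuous process from ξ^{(0)} = x^{(0)}. Then for any round t and any δ ≥ 1, P( max_{w∈V} |x_w^{(t)} − ξ_w^{(t)}| ≥ √(4δ·log n) ) ≤ 2·n^{−δ+1}, where log denotes the natural logarithm. -/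
namespace LB


/-
Work with the exponential moments of linear functionals of the load vector. In one round with
matching matrix `A`, averaging replaces `⟨x, y⟩` by `⟨x, A y⟩`, and the excess token of each matched
pair `{u, v}` adds an independent random sign times at most `|y u - y v| / 2`. Since
`cosh c ≤ exp (c ^ 2 / 2)`, this noise costs a factor `exp (∑ (y u - y v) ^ 2 / 8)`, and
`∑ (y u - y v) ^ 2 = 2 (‖y‖² - ‖A y‖²)` over the matched pairs. The costs therefore telescope over
the rounds: `𝔼 exp ⟨x^{(t)}, y⟩ ≤ exp (⟨ξ^{(t)}, y⟩ + ‖y‖² / 4)` whatever `t` and the matchings are.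
Chernoff's bound with `y = s e_w` and a union bound over `w` conclude.
-/

open Finset Matrix
open scoped BigOperators

section UniformExpectation

variable {ι κ β Ω K : Type*} [Fintype ι] [Fintype κ] [Fintype β] [Fintype Ω] [Semifield K]
  [CharZero K]

section Independence

variable [DecidableEq ι]

theorem expect_prod_apply {α : ι → Type*} [∀ i, Fintype (α i)] (g : ∀ i, α i → K) :
    𝔼 a : ∀ i, α i, ∏ i, g i (a i) = ∏ i, 𝔼 b, g i b := by
  simp only [Fintype.expect_eq_sum_div_card, prod_div_distrib, Fintype.prod_sum, Fintype.card_pi,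
    Nat.cast_prod]

theorem expect_comp_apply [Nonempty β] (g : β → K) (i : ι) :
    𝔼 a : ι → β, g (a i) = 𝔼 b, g b := by
  have h := expect_prod_apply fun (j : ι) (b : β) => if j = i then g b else 1
  have hprod (j : ι) : (𝔼 b, if j = i then g b else 1) = if j = i then 𝔼 b, g b else 1 := by
    split_ifs
    · rfl
    · exact Fintype.expect_const 1
  simpa only [hprod, prod_ite_eq', mem_univ, if_true] using h

theorem expect_exp_sign (c : ℝ) :
    𝔼 b : Bool, Real.exp (if b then c else -c) = Real.cosh c := by
  rw [Fintype.expect_eq_sum_div_card, Real.cosh_eq]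
  simp

theorem expect_exp_sum_sign_le [DecidableEq κ] (v : ι → κ) (c : ι → ℝ) :
    𝔼 φ : ι → κ → Bool, Real.exp (∑ u, if φ u (v u) then c u else -c u)
      ≤ Real.exp ((∑ u, c u ^ 2) / 2) := by
  calc 𝔼 φ : ι → κ → Bool, Real.exp (∑ u, if φ u (v u) then c u else -c u)
      = ∏ u, 𝔼 b : κ → Bool, Real.exp (if b (v u) then c u else -c u) := by
        simp only [Real.exp_sum]
        exact expect_prod_apply fun u (b : κ → Bool) => Real.exp (if b (v u) then c u else -c u)
    _ = ∏ u, Real.cosh (c u) := by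
        refine prod_congr rfl fun u _ => ?_
        rw [expect_comp_apply (fun b : Bool => Real.exp (if b then c u else -c u)),
          expect_exp_sign]
    _ ≤ ∏ u, Real.exp (c u ^ 2 / 2) :=
        prod_le_prod (fun u _ => (Real.cosh_pos _).le) fun u _ => Real.cosh_le_exp_half_sq _
    _ = Real.exp ((∑ u, c u ^ 2) / 2) := by rw [← Real.exp_sum, sum_div]

end Independence

theorem pr_eq_expect (A : Ω → Prop) [DecidablePred A] :
    pr A = 𝔼 ω, if A ω then (1 : ℝ) else 0 := by
  rw [Fintype.expect_eq_sum_div_card, sum_boole, pr]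
  congr!

theorem pr_le_expect {A : Ω → Prop} {Z : Ω → ℝ} (hZ : ∀ ω, 0 ≤ Z ω) (hA : ∀ ω, A ω → 1 ≤ Z ω) :
    pr A ≤ 𝔼 ω, Z ω := by
  classical
  rw [pr_eq_expect]
  refine expect_le_expect fun ω _ => ?_
  split_ifs with h
  exacts [hA ω h, hZ ω]

theorem pr_exists_le_sum (A : ι → Ω → Prop) : pr (fun ω => ∃ i, A i ω) ≤ ∑ i, pr (A i) := by
  classical
  have hnonneg (ω : Ω) (i : ι) : (0 : ℝ) ≤ if A i ω then 1 else 0 := by positivity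
  simp only [pr_eq_expect (A _)]
  rw [← expect_sum_comm]
  refine pr_le_expect (fun ω => sum_nonneg fun i _ => hnonneg ω i) ?_
  rintro ω ⟨i, hi⟩
  calc (1 : ℝ) = if A i ω then 1 else 0 := (if_pos hi).symm
    _ ≤ ∑ j, if A j ω then 1 else 0 := single_le_sum (fun j _ => hnonneg ω j) (mem_univ i)

theorem pr_le_abs_sub_le_of_expect_exp_le {X : Ω → ℝ} {μ v r : ℝ} (hv : 0 < v) (hr : 0 ≤ r)
    (hX : ∀ s, 𝔼 ω, Real.exp (s * X ω) ≤ Real.exp (s * μ + v * s ^ 2 / 2)) :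
    pr (fun ω => r ≤ |X ω - μ|) ≤ 2 * Real.exp (-r ^ 2 / (2 * v)) := by
  -- The exponent `v * s ^ 2 / 2 - s * r` is minimal at `s = r / v`.
  set s := r / v with hs
  have hs0 : 0 ≤ s := by positivity
  have tail (σ : ℝ) (hσ : σ ^ 2 = 1) :
      𝔼 ω, Real.exp (σ * s * X ω - (σ * s * μ + s * r)) ≤ Real.exp (-r ^ 2 / (2 * v)) := by
    simp only [Real.exp_sub]
    rw [← expect_div, div_le_iff₀ (Real.exp_pos _), ← Real.exp_add]
    refine (hX (σ * s)).trans_eq (congrArg Real.exp ?_)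
    rw [mul_pow, hσ, hs]
    field_simp
    ring
  calc pr (fun ω => r ≤ |X ω - μ|)
      ≤ 𝔼 ω, (Real.exp (1 * s * X ω - (1 * s * μ + s * r))
          + Real.exp (-1 * s * X ω - (-1 * s * μ + s * r))) := by
        refine pr_le_expect (fun ω => by positivity) fun ω hω => ?_
        rcases le_abs.mp hω with h | h
        · exact le_add_of_le_of_nonneg (Real.one_le_exp (by nlinarith)) (Real.exp_pos _).le
        · exact le_add_of_nonneg_of_le (Real.exp_pos _).le (Real.one_le_exp (by nlinarith))
    _ ≤ 2 * Real.exp (-r ^ 2 / (2 * v)) := by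
        rw [expect_add_distrib, two_mul]
        exact add_le_add (tail 1 (by norm_num)) (tail (-1) (by norm_num))

theorem pr_exists_le_abs_sub_le {X : Ω → ι → ℝ} {μ : ι → ℝ} {v r : ℝ} (hv : 0 < v) (hr : 0 ≤ r)
    (hX : ∀ y, 𝔼 ω, Real.exp (X ω ⬝ᵥ y) ≤ Real.exp (μ ⬝ᵥ y + v * (y ⬝ᵥ y) / 2)) :
    pr (fun ω => ∃ i, r ≤ |X ω i - μ i|)
      ≤ 2 * Fintype.card ι * Real.exp (-r ^ 2 / (2 * v)) := by
  classical
  have coordinate (i : ι) :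
      pr (fun ω => r ≤ |X ω i - μ i|) ≤ 2 * Real.exp (-r ^ 2 / (2 * v)) := by
    refine pr_le_abs_sub_le_of_expect_exp_le hv hr fun s => ?_
    simpa only [dotProduct_single, Pi.single_eq_same, mul_comm _ s, ← sq] using hX (Pi.single i s)
  calc pr (fun ω => ∃ i, r ≤ |X ω i - μ i|)
      ≤ ∑ i, pr (fun ω => r ≤ |X ω i - μ i|) := pr_exists_le_sum _
    _ ≤ ∑ _i : ι, 2 * Real.exp (-r ^ 2 / (2 * v)) := sum_le_sum fun i _ => coordinate i
    _ = 2 * Fintype.card ι * Real.exp (-r ^ 2 / (2 * v)) := by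
        rw [sum_const, card_univ, nsmul_eq_mul]
        ring

end UniformExpectation

theorem two_mul_mul_exp_neg_sqrt_sq_le {a δ : ℝ} (ha : 1 ≤ a) (hδ : 0 ≤ δ) :
    2 * a * Real.exp (-√(4 * δ * Real.log a) ^ 2) ≤ 2 * a ^ (-δ + 1) := by
  have ha0 : 0 < a := zero_lt_one.trans_le ha
  have hlog : 0 ≤ δ * Real.log a := mul_nonneg hδ (Real.log_nonneg ha)
  rw [Real.sq_sqrt (by linarith), Real.rpow_add_one ha0.ne', mul_assoc, mul_comm a,
    Real.rpow_def_of_pos ha0]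
  gcongr
  linarith

section Round

variable {n : ℕ} (m : Matching n)

theorem sum_eq_pairSum {h : Fin n → ℝ} (h0 : ∀ u, m.f u = u → h u = 0) :
    ∑ u, h u = pairSum m fun u v => h u + h v := by
  have reindex : ∑ u, (if m.f u < u then h u else 0) = ∑ u, if u < m.f u then h (m.f u) else 0 := by
    rw [← Equiv.sum_comp (Function.Involutive.toPerm m.f m.invol)]
    change ∑ u, (if m.f (m.f u) < m.f u then h (m.f u) else 0) = _
    simp only [m.invol]
  have split (u : Fin n) :
      h u = (if u < m.f u then h u else 0) + if m.f u < u then h u else 0 := by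
    rcases lt_trichotomy u (m.f u) with hu | hu | hu
    · simp [hu, hu.not_gt]
    · simp [← hu, h0 u hu.symm]
    · simp [hu, hu.not_gt]
  rw [sum_congr rfl fun u _ => split u, sum_add_distrib, reindex, ← sum_add_distrib]
  refine sum_congr rfl fun u _ => ?_
  split_ifs <;> simp

theorem matrix_mulVec_apply (y : Fin n → ℝ) (u : Fin n) :
    (m.matrix *ᵥ y) u = (y u + y (m.f u)) / 2 := by
  by_cases hu : m.f u = u
  · simp [mulVec, dotProduct, Matching.matrix, hu]
  · have entry (v : Fin n) : m.matrix u v * y v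
        = (if v = u then y v / 2 else 0) + if v = m.f u then y v / 2 else 0 := by
      by_cases hvu : v = u
      · simp [Matching.matrix, hvu, hu, Ne.symm hu, div_eq_inv_mul]
      · by_cases hvf : v = m.f u <;> simp [Matching.matrix, hvf, hvu, hu, div_eq_inv_mul]
    simp only [mulVec, dotProduct, entry, sum_add_distrib, sum_ite_eq', mem_univ, if_true]
    ring

theorem dotProduct_self_sub_mulVec_eq_pairSum (y : Fin n → ℝ) :
    y ⬝ᵥ y - (m.matrix *ᵥ y) ⬝ᵥ (m.matrix *ᵥ y) = pairSum m fun u v => (y u - y v) ^ 2 / 2 := by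
  rw [dotProduct, dotProduct, ← sum_sub_distrib, sum_eq_pairSum m]
  · refine sum_congr rfl fun u _ => if_congr Iff.rfl ?_ rfl
    simp only [matrix_mulVec_apply, m.invol]
    ring
  · intro u hu
    simp only [matrix_mulVec_apply, hu]
    ring

theorem cast_ediv_two (k : ℤ) : ((k.ediv 2 : ℤ) : ℝ) = k / 2 - (k % 2 : ℤ) / 2 := by
  have hZ : 2 * k.ediv 2 + k % 2 = k := Int.mul_ediv_add_emod k 2
  have h : (2 * k.ediv 2 + (k % 2 : ℤ) : ℝ) = k := mod_cast hZ
  linarith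

theorem cast_add_one_ediv_two (k : ℤ) :
    (((k + 1).ediv 2 : ℤ) : ℝ) = k / 2 + (k % 2 : ℤ) / 2 := by
  have hZ : 2 * (k + 1).ediv 2 = k + k % 2 := by
    change 2 * ((k + 1) / 2) = _
    omega
  have h : (2 * (k + 1).ediv 2 : ℝ) = k + (k % 2 : ℤ) := mod_cast hZ
  linarith

variable (z : Fin n → ℤ) (y : Fin n → ℝ)

/-- The amount, up to the sign given by the orientation, by which the excess token of the pair
`{u, m.f u}` changes `⟨x, y⟩` in a round started from the loads `z`. It is attached to the smaller
endpoint, where `step` looks up the orientation, and is `0` at all other nodes. -/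
noncomputable def excessWeight (u : Fin n) : ℝ :=
  if u < m.f u then ((z u + z (m.f u)) % 2 : ℤ) / 2 * (y u - y (m.f u)) else 0

theorem step_dotProduct (φ : Fin n → Fin n → Bool) :
    (fun u => (step m φ z u : ℝ)) ⬝ᵥ y = (fun u => (z u : ℝ)) ⬝ᵥ (m.matrix *ᵥ y)
      + ∑ u, if φ u (m.f u) then excessWeight m z y u else -excessWeight m z y u := by
  rw [← sub_eq_iff_eq_add', dotProduct, dotProduct, ← sum_sub_distrib, sum_eq_pairSum m]
  · refine sum_congr rfl fun u _ => ?_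
    by_cases hu : u < m.f u
    · simp only [step, excessWeight, matrix_mulVec_apply, m.invol, hu, hu.ne, hu.ne', hu.not_gt,
        if_true, if_false, add_comm (z (m.f u)) (z u)]
      split_ifs <;> rw [cast_add_one_ediv_two, cast_ediv_two] <;> push_cast <;> ring
    · simp [excessWeight, hu]
  · intro u hu
    simp only [step, matrix_mulVec_apply, hu, if_true]
    ring

theorem sum_excessWeight_sq_le :
    ∑ u, excessWeight m z y u ^ 2
      ≤ (y ⬝ᵥ y - (m.matrix *ᵥ y) ⬝ᵥ (m.matrix *ᵥ y)) / 2 := by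
  rw [dotProduct_self_sub_mulVec_eq_pairSum, pairSum, sum_div]
  refine sum_le_sum fun u _ => ?_
  rw [excessWeight]
  split_ifs
  · rcases Int.emod_two_eq_zero_or_one (z u + z (m.f u)) with h | h <;> rw [h] <;> push_cast <;>
      linarith [sq_nonneg (y u - y (m.f u))]
  · simp

theorem expect_exp_step_dotProduct_le :
    𝔼 φ, Real.exp ((fun u => (step m φ z u : ℝ)) ⬝ᵥ y)
      ≤ Real.exp ((fun u => (z u : ℝ)) ⬝ᵥ (m.matrix *ᵥ y)
          + (y ⬝ᵥ y - (m.matrix *ᵥ y) ⬝ᵥ (m.matrix *ᵥ y)) / 4) := by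
  simp only [step_dotProduct, Real.exp_add, ← mul_expect]
  refine mul_le_mul_of_nonneg_left ((expect_exp_sum_sign_le m.f _).trans ?_) (Real.exp_pos _).le
  exact Real.exp_le_exp.mpr (by linarith [sum_excessWeight_sq_le m z y])

end Round

section Rounds

variable {n : ℕ} (M : ℕ → Matching n)

theorem prodMatrix_of_lt {t₁ t₂ : ℕ} (h : t₂ < t₁) : prodMatrix M t₁ t₂ = 1 := by
  simp [prodMatrix, Nat.sub_eq_zero_of_le h]

theorem prodMatrix_succ_right {t₁ t₂ : ℕ} (h : t₁ ≤ t₂ + 1) :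
    prodMatrix M t₁ (t₂ + 1) = prodMatrix M t₁ t₂ * (M (t₂ + 1)).matrix := by
  simp [prodMatrix, Nat.sub_add_comm h, List.range'_concat, Nat.add_sub_cancel' h]

theorem lift_snoc_last {A : Type*} (a₀ : A) {t : ℕ} (ω : Fin t → A) (a : A) :
    lift a₀ (Fin.snoc ω a : Fin (t + 1) → A) (t + 1) = a := by
  simp [lift, Fin.snoc]

theorem lift_snoc_of_le {A : Type*} (a₀ : A) {t i : ℕ} (ω : Fin t → A) (a : A) (h1 : 1 ≤ i)
    (hi : i ≤ t) : lift a₀ (Fin.snoc ω a : Fin (t + 1) → A) i = lift a₀ ω i := by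
  have hlt : i - 1 < t := by omega
  simp [lift, Fin.snoc, hlt, hlt.trans t.lt_succ_self]

variable (t₁ : ℕ)

theorem loadsFrom_congr {Φ Ψ : ℕ → Fin n → Fin n → Bool} (x : Fin n → ℤ) {t : ℕ}
    (h : ∀ i, 1 ≤ i → i ≤ t → Φ i = Ψ i) : loadsFrom M t₁ Φ x t = loadsFrom M t₁ Ψ x t := by
  induction t with
  | zero => rfl
  | succ t ih =>
    rw [loadsFrom, loadsFrom, ih fun i h1 hi => h i h1 (Nat.le_succ_of_le hi),
      h (t + 1) (Nat.le_add_left 1 t) le_rfl]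

variable (a₀ : Fin n → Fin n → Bool) (x : Fin n → ℤ)

theorem loadsFrom_lift_snoc {t : ℕ} (ω : Fin t → Fin n → Fin n → Bool) (a : Fin n → Fin n → Bool) :
    loadsFrom M t₁ (lift a₀ (Fin.snoc ω a : Fin (t + 1) → Fin n → Fin n → Bool)) x (t + 1)
      = step (M (t₁ + t + 1)) a (loadsFrom M t₁ (lift a₀ ω) x t) := by
  rw [loadsFrom, lift_snoc_last,
    loadsFrom_congr M t₁ x fun i h1 hi => lift_snoc_of_le a₀ ω a h1 hi]

theorem expect_exp_loadsFrom_dotProduct_le (t : ℕ) (y : Fin n → ℝ) :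
    𝔼 ω : Fin t → Fin n → Fin n → Bool,
        Real.exp ((fun u => (loadsFrom M t₁ (lift a₀ ω) x t u : ℝ)) ⬝ᵥ y)
      ≤ Real.exp ((fun u => (x u : ℝ)) ᵥ* prodMatrix M (t₁ + 1) (t₁ + t) ⬝ᵥ y
          + (y ⬝ᵥ y) / 4) := by
  induction t generalizing y with
  | zero =>
    simp only [loadsFrom, Fintype.expect_const, add_zero, prodMatrix_of_lt M t₁.lt_succ_self,
      vecMul_one, Real.exp_le_exp, le_add_iff_nonneg_right]
    exact div_nonneg (sum_nonneg fun u _ => mul_self_nonneg (y u)) zero_le_four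
  | succ t ih =>
    set A := (M (t₁ + t + 1)).matrix
    set q := (y ⬝ᵥ y - (A *ᵥ y) ⬝ᵥ (A *ᵥ y)) / 4 with hq
    set X := fun ω : Fin t → Fin n → Fin n → Bool => loadsFrom M t₁ (lift a₀ ω) x t
    calc 𝔼 ω : Fin (t + 1) → Fin n → Fin n → Bool,
          Real.exp ((fun u => (loadsFrom M t₁ (lift a₀ ω) x (t + 1) u : ℝ)) ⬝ᵥ y)
        = 𝔼 ω, 𝔼 a, Real.exp ((fun u => (step (M (t₁ + t + 1)) a (X ω) u : ℝ)) ⬝ᵥ y) := by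
          rw [expect_comm, ← expect_product', univ_product_univ]
          refine (Fintype.expect_equiv (Fin.snocEquiv fun _ => Fin n → Fin n → Bool) _ _ ?_).symm
          rintro ⟨a, ω⟩
          simp only [Fin.snocEquiv, Equiv.coe_fn_mk, loadsFrom_lift_snoc, X]
      _ ≤ 𝔼 ω, Real.exp ((fun u => (X ω u : ℝ)) ⬝ᵥ (A *ᵥ y) + q) :=
          expect_le_expect fun ω _ => expect_exp_step_dotProduct_le _ (X ω) y
      _ = (𝔼 ω, Real.exp ((fun u => (X ω u : ℝ)) ⬝ᵥ (A *ᵥ y))) * Real.exp q := by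
          simp only [Real.exp_add, expect_mul]
      _ ≤ Real.exp ((fun u => (x u : ℝ)) ᵥ* prodMatrix M (t₁ + 1) (t₁ + t) ⬝ᵥ (A *ᵥ y)
            + (A *ᵥ y) ⬝ᵥ (A *ᵥ y) / 4) * Real.exp q :=
          mul_le_mul_of_nonneg_right (ih (A *ᵥ y)) (Real.exp_pos _).le
      _ = _ := by
          rw [← Real.exp_add, dotProduct_mulVec, vecMul_vecMul, ← add_assoc t₁ t 1,
            prodMatrix_succ_right M (by omega), hq]
          congr 1
          ring

theorem stmt9_general (t : ℕ) {r : ℝ} (hr : 0 ≤ r) :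
    pr (fun ω : Fin t → Fin n → Fin n → Bool =>
        ∃ w : Fin n, r ≤ |(loadsFrom M t₁ (lift a₀ ω) x t w : ℝ) -
          ((fun u => (x u : ℝ)) ᵥ* prodMatrix M (t₁ + 1) (t₁ + t)) w|)
      ≤ 2 * n * Real.exp (-r ^ 2) := by
  have h := pr_exists_le_abs_sub_le (v := 1 / 2)
    (μ := (fun u => (x u : ℝ)) ᵥ* prodMatrix M (t₁ + 1) (t₁ + t)) one_half_pos hr fun y =>
    (expect_exp_loadsFrom_dotProduct_le M t₁ a₀ x t y).trans_eq (by congr 1; ring)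
  rwa [Fintype.card_fin, mul_one_div_cancel two_ne_zero, div_one] at h

end Rounds

/-- Deviation between the discrete process (independent uniformly
random orientations) and the continuous process with the same matchings:
for any `t` and `δ ≥ 1`,
`P( max_w |x_w^{(t)} - ξ_w^{(t)}| ≥ √(4δ log n) ) ≤ 2 n^{-δ+1}`. -/
theorem stmt9 {n : ℕ} (hn : 2 ≤ n) (M : ℕ → Matching n) (x : Fin n → ℤ)
    (t : ℕ) (δ : ℝ) (hδ : 1 ≤ δ) :
    pr (fun ω : Fin t → Fin n → Fin n → Bool =>
        ∃ w : Fin n, Real.sqrt (4 * δ * Real.log n) ≤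
          |(loads M (lift (orientDefault n) ω) x t w : ℝ) -
            Matrix.vecMul (fun u => (x u : ℝ)) (prodMatrix M 1 t) w|)
      ≤ 2 * (n : ℝ) ^ (-δ + 1) := by
  simpa only [zero_add, loads] using (stmt9_general M 0 _ x t (Real.sqrt_nonneg _)).trans
    (two_mul_mul_exp_neg_sqrt_sq_le (mod_cast one_le_two.trans hn) (zero_le_one.trans hδ))

end LB
end
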